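/- Let K = ⋃_{ℓ=1}^L [a_ℓ, b_ℓ] ⊆ [−1,1] with −1 = a_1 < b_1 < a_2 < ⋯ < a_L < b_L = 1, let w be continuous and strictly positive on K, and let P = Σ_{n=0}^N p_n T_n be a real polynomial of degree at most N. Then ‖P/w‖_{L1(K)} equals the infimum, over all real sequences y^{1,±},…,y^{L,±} ∈ ℝ^ℕ such that for each ℓ one has y^{ℓ,+}_k − y^{ℓ,−}_k = (J^ℓ W^ℓ p)_k for all k ≥ 0 and Toep_d(y^{ℓ,±}) is positive semidefinite for all d ≥ 0, of the quantity Σ_{ℓ=1}^L ((b_ℓ−a_ℓ)/2)(y^{ℓ,+}_0 + y^{ℓ,−}_0); moreover this infimum is attained. -/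

import Mathlib

open MeasureTheory Filter Polynomial

/-- The `(d+1) × (d+1)` symmetric Toeplitz matrix built from a vector `y ∈ ℝ^{d+1}`,
with entries `y_{|i−j|}`. -/
noncomputable def toepFin (d : ℕ) (y : Fin (d + 1) → ℝ) :
    Matrix (Fin (d + 1)) (Fin (d + 1)) ℝ :=
  fun i j => y ⟨(((i : ℕ) : ℤ) - ((j : ℕ) : ℤ)).natAbs, by omega⟩

/-- The transplantation `P_ℓ(x) = P(((bℓ−aℓ)x + aℓ + bℓ)/2)` of a polynomial
from `[aℓ, bℓ]` to `[-1, 1]`. -/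
noncomputable def transplant (aℓ bℓ : ℝ) (P : Polynomial ℝ) : Polynomial ℝ :=
  P.comp (Polynomial.C ((bℓ - aℓ) / 2) * Polynomial.X + Polynomial.C ((aℓ + bℓ) / 2))

/-- The entries `J^ℓ_{k,n} = ∫_0^π cos(kθ) sin((n+1)θ) / w_ℓ(cos θ) dθ`, where
`w_ℓ(x) = w(((bℓ−aℓ)x + aℓ + bℓ)/2)` is the transplantation of the weight `w`. -/
noncomputable def Jent (aℓ bℓ : ℝ) (w : ℝ → ℝ) (k n : ℕ) : ℝ :=
  ∫ θ in (0:ℝ)..Real.pi,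
    Real.cos (k * θ) * Real.sin ((n + 1) * θ) /
      w (((bℓ - aℓ) * Real.cos θ + aℓ + bℓ) / 2)

/-- The weighted `L1` norm `‖P/w‖_{L1(K)} = ∑_ℓ ∫_{a_ℓ}^{b_ℓ} |P(t)|/w(t) dt`
on `K = ⋃_{ℓ<L} [a ℓ, b ℓ]`. -/
noncomputable def L1K (L : ℕ) (a b : ℕ → ℝ) (w : ℝ → ℝ) (P : Polynomial ℝ) : ℝ :=
  ∑ ℓ ∈ Finset.range L, ∫ t in (a ℓ)..(b ℓ), |P.eval t| / w t

/-- The ersatz norm `⫽P⫽_d`: the infimum of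
`∑_ℓ ((b_ℓ−a_ℓ)/2)(y^{ℓ,+}_0 + y^{ℓ,−}_0)` over vectors `y^{ℓ,±} ∈ ℝ^{d+1}` with
`y^{ℓ,+} − y^{ℓ,−} = J^{ℓ,d} W^ℓ p` and `Toep_d(y^{ℓ,±}) ⪰ 0`, where `q ℓ = W^ℓ p` is
the vector of second-kind Chebyshev coefficients of the transplantation `P_ℓ`. -/
noncomputable def ersatz (L N d : ℕ) (a b : ℕ → ℝ) (w : ℝ → ℝ) (P : Polynomial ℝ) : ℝ :=
  sInf { s : ℝ |
    ∃ q : ℕ → Fin (N + 1) → ℝ,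
      (∀ ℓ < L, transplant (a ℓ) (b ℓ) P
          = ∑ n : Fin (N + 1), Polynomial.C (q ℓ n) * Polynomial.Chebyshev.U ℝ ((n : ℕ) : ℤ)) ∧
      ∃ yp ym : ℕ → Fin (d + 1) → ℝ,
        (∀ ℓ < L, ∀ k : Fin (d + 1),
            yp ℓ k - ym ℓ k
              = ∑ n : Fin (N + 1), Jent (a ℓ) (b ℓ) w (k : ℕ) (n : ℕ) * q ℓ n) ∧
        (∀ ℓ < L, (toepFin d (yp ℓ)).PosSemidef ∧ (toepFin d (ym ℓ)).PosSemidef) ∧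
        s = ∑ ℓ ∈ Finset.range L, ((b ℓ - a ℓ) / 2) * (yp ℓ 0 + ym ℓ 0) }

/-- The `(d+1) × (d+1)` symmetric Toeplitz section of an infinite sequence `y`. -/
noncomputable def toepN (d : ℕ) (y : ℕ → ℝ) : Matrix (Fin (d + 1)) (Fin (d + 1)) ℝ :=
  fun i j => y ((((i : ℕ) : ℤ)) - ((j : ℕ) : ℤ)).natAbs

theorem aux_integral_cos (m : ℤ) :
    ∫ θ in (0:ℝ)..(2 * Real.pi), Real.cos (m * θ) = if m = 0 then 2 * Real.pi else 0 := by
  split_ifs with h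
  · subst h; simp
  · have hm : (m : ℝ) ≠ 0 := by exact_mod_cast h
    rw [intervalIntegral.integral_comp_mul_left (fun x => Real.cos x) hm, integral_cos]
    have : Real.sin ((m : ℝ) * (2 * Real.pi)) = 0 := by
      have := Real.sin_int_mul_pi (2 * m)
      push_cast at this
      rw [← this]; congr 1; ring
    simp [this]

theorem aux_integral_cos_cos (k m : ℤ) :
    ∫ θ in (0:ℝ)..(2 * Real.pi), Real.cos (k * θ) * Real.cos (m * θ)
      = Real.pi * ((if m = k then 1 else 0) + (if m = -k then 1 else 0)) := by
  have h : ∀ θ : ℝ, Real.cos (k * θ) * Real.cos (m * θ)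
      = (1/2) * Real.cos (((m - k : ℤ) : ℝ) * θ) + (1/2) * Real.cos (((m + k : ℤ) : ℝ) * θ) := by
    intro θ
    push_cast
    rw [sub_mul, add_mul, Real.cos_sub, Real.cos_add]; ring
  simp_rw [h]
  rw [intervalIntegral.integral_add (Continuous.intervalIntegrable (by fun_prop) _ _)
    (Continuous.intervalIntegrable (by fun_prop) _ _), intervalIntegral.integral_const_mul,
    intervalIntegral.integral_const_mul, aux_integral_cos, aux_integral_cos]
  have e1 : (m - k = 0) ↔ (m = k) := by omega
  have e2 : (m + k = 0) ↔ (m = -k) := by omega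
  simp only [e1, e2]
  split_ifs <;> ring

theorem aux_fejer_nonneg (d : ℕ) (y : ℕ → ℝ) (hy : (toepN d y).PosSemidef) (θ : ℝ) :
    0 ≤ ∑ i ∈ Finset.range (d + 1), ∑ j ∈ Finset.range (d + 1),
      y ((i : ℤ) - (j : ℤ)).natAbs * Real.cos ((((i : ℤ) - (j : ℤ) : ℤ) : ℝ) * θ) := by
  have h1 := hy.dotProduct_mulVec_nonneg (fun i => Real.cos ((i : ℕ) * θ))
  have h2 := hy.dotProduct_mulVec_nonneg (fun i => Real.sin ((i : ℕ) * θ))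
  have h3 := add_nonneg h1 h2
  simp only [dotProduct, Matrix.mulVec, toepN, Pi.star_apply, star_trivial, Finset.mul_sum] at h3
  rw [← Finset.sum_add_distrib] at h3
  simp only [← Finset.sum_add_distrib] at h3
  refine h3.trans_eq ?_
  rw [Finset.sum_range]
  refine Finset.sum_congr rfl fun i _ => ?_
  rw [Finset.sum_range]
  refine Finset.sum_congr rfl fun j _ => ?_
  push_cast
  rw [sub_mul, Real.cos_sub]; ring

theorem aux_count (d k : ℕ) (y : ℕ → ℝ) (hk : k ≤ d + 1) :
    ∑ i ∈ Finset.range (d + 1), ∑ j ∈ Finset.range (d + 1),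
      y ((i : ℤ) - (j : ℤ)).natAbs * (if (i : ℤ) - (j : ℤ) = k then 1 else 0)
      = ((d + 1 : ℝ) - k) * y k := by
  rw [Finset.sum_comm]
  have : ∀ j ∈ Finset.range (d + 1), ∑ i ∈ Finset.range (d + 1),
      y ((i : ℤ) - (j : ℤ)).natAbs * (if (i : ℤ) - (j : ℤ) = k then (1:ℝ) else 0)
      = if j ∈ Finset.range (d + 1 - k) then y k else 0 := by
    intro j hj
    have e : ∀ i ∈ Finset.range (d + 1), 
      y ((i : ℤ) - (j : ℤ)).natAbs * (if (i : ℤ) - (j : ℤ) = k then (1:ℝ) else 0)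
      = if i = j + k then y k else 0 := by
      intro i _
      by_cases h : i = j + k
      · subst h
        have : ((j + k : ℕ) : ℤ) - (j : ℤ) = k := by push_cast; ring
        simp
      · have h' : ¬ ((i : ℤ) - (j : ℤ) = k) := by omega
        simp [h, h']
    rw [Finset.sum_congr rfl e, Finset.sum_ite_eq']
    simp only [Finset.mem_range]
    have : (j + k < d + 1) ↔ (j < d + 1 - k) := by omega
    simp only [this]
  rw [Finset.sum_congr rfl this, ← Finset.sum_filter, Finset.sum_const]
  have hf : Finset.filter (fun j => j ∈ Finset.range (d + 1 - k)) (Finset.range (d + 1))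
      = Finset.range (d + 1 - k) := by
    ext j; simp only [Finset.mem_filter, Finset.mem_range]; omega
  rw [hf, Finset.card_range, nsmul_eq_mul, Nat.cast_sub hk]
  push_cast; ring

theorem aux_fejer_coeff (d k : ℕ) (y : ℕ → ℝ) (hk : k ≤ d + 1) :
    ∫ θ in (0:ℝ)..(2 * Real.pi), Real.cos (k * θ) *
      (∑ i ∈ Finset.range (d + 1), ∑ j ∈ Finset.range (d + 1),
        y ((i : ℤ) - (j : ℤ)).natAbs * Real.cos ((((i : ℤ) - (j : ℤ) : ℤ) : ℝ) * θ))
      = 2 * Real.pi * (((d + 1 : ℝ) - k) * y k) := by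
  simp only [Finset.mul_sum]
  rw [intervalIntegral.integral_finsetSum
    (fun i _ => Continuous.intervalIntegrable (by fun_prop) _ _)]
  have : ∀ i ∈ Finset.range (d + 1),
      ∫ θ in (0:ℝ)..(2 * Real.pi), ∑ j ∈ Finset.range (d + 1), Real.cos (k * θ) *
        (y ((i : ℤ) - (j : ℤ)).natAbs * Real.cos ((((i : ℤ) - (j : ℤ) : ℤ) : ℝ) * θ))
      = ∑ j ∈ Finset.range (d + 1), Real.pi *
        (y ((i : ℤ) - (j : ℤ)).natAbs * (if (i : ℤ) - (j : ℤ) = k then 1 else 0)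
        + y ((j : ℤ) - (i : ℤ)).natAbs * (if (j : ℤ) - (i : ℤ) = k then 1 else 0)) := by
    intro i _
    rw [intervalIntegral.integral_finsetSum
      (fun i _ => Continuous.intervalIntegrable (by fun_prop) _ _)]
    refine Finset.sum_congr rfl fun j _ => ?_
    have h := aux_integral_cos_cos k ((i : ℤ) - (j : ℤ))
    simp only [mul_left_comm _ (y _) _, intervalIntegral.integral_const_mul]
    rw [Int.cast_natCast] at h
    rw [h]
    have e : ((j : ℤ) - (i : ℤ)).natAbs = ((i : ℤ) - (j : ℤ)).natAbs := by omega
    have e2 : ((i : ℤ) - (j : ℤ) = -k) ↔ ((j : ℤ) - (i : ℤ) = k) := by omega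
    rw [e]
    simp only [e2]
    ring
  rw [Finset.sum_congr rfl this]
  simp only [← Finset.mul_sum, Finset.sum_add_distrib]
  rw [aux_count d k y hk, Finset.sum_comm, aux_count d k y hk]
  ring

theorem aux_pos (y : ℕ → ℝ) (hy : ∀ d, (toepN d y).PosSemidef) (n : ℕ) (c : ℕ → ℝ)
    (hc : ∀ θ : ℝ, 0 ≤ ∑ k ∈ Finset.range n, c k * Real.cos (k * θ)) :
    0 ≤ ∑ k ∈ Finset.range n, c k * y k := by
  have key : ∀ d : ℕ, n ≤ d →
      0 ≤ ∑ k ∈ Finset.range n, c k * (((d + 1 : ℝ) - k) * y k) := by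
    intro d hd
    have h : 0 ≤ ∫ θ in (0:ℝ)..(2 * Real.pi), (∑ k ∈ Finset.range n, c k * Real.cos (k * θ)) *
      (∑ i ∈ Finset.range (d + 1), ∑ j ∈ Finset.range (d + 1),
        y ((i : ℤ) - (j : ℤ)).natAbs * Real.cos ((((i : ℤ) - (j : ℤ) : ℤ) : ℝ) * θ)) :=
      intervalIntegral.integral_nonneg (by positivity)
        fun θ _ => mul_nonneg (hc θ) (aux_fejer_nonneg d y (hy d) θ)
    simp only [Finset.sum_mul, mul_assoc] at h
    rw [intervalIntegral.integral_finsetSum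
      (fun i _ => Continuous.intervalIntegrable (by fun_prop) _ _)] at h
    simp only [intervalIntegral.integral_const_mul] at h
    have e : ∀ k ∈ Finset.range n, c k * ∫ θ in (0:ℝ)..(2 * Real.pi), Real.cos (k * θ) *
      (∑ i ∈ Finset.range (d + 1), ∑ j ∈ Finset.range (d + 1),
        y ((i : ℤ) - (j : ℤ)).natAbs * Real.cos ((((i : ℤ) - (j : ℤ) : ℤ) : ℝ) * θ))
      = 2 * Real.pi * (c k * (((d + 1 : ℝ) - k) * y k)) := by
      intro k hk
      rw [aux_fejer_coeff d k y (by have := Finset.mem_range.1 hk; omega)]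
      ring
    rw [Finset.sum_congr rfl e, ← Finset.mul_sum] at h
    exact nonneg_of_mul_nonneg_right h (by positivity)
  set A := ∑ k ∈ Finset.range n, c k * y k with hA
  set B := ∑ k ∈ Finset.range n, c k * (k * y k) with hB
  have key2 : ∀ d : ℕ, n ≤ d → 0 ≤ (d + 1 : ℝ) * A - B := by
    intro d hd
    refine (key d hd).trans_eq ?_
    rw [hA, hB, Finset.mul_sum, ← Finset.sum_sub_distrib]
    exact Finset.sum_congr rfl fun k _ => by ring
  by_contra hneg
  push Not at hneg
  obtain ⟨m, hm⟩ := exists_nat_gt (B / A)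
  have hm' := key2 (max n m) (le_max_left _ _)
  have h1 : (m : ℝ) ≤ (max n m : ℕ) := by exact_mod_cast le_max_right _ _
  have h2 : B / A < (max n m : ℕ) + 1 := by linarith
  rw [div_lt_iff_of_neg hneg] at h2
  linarith

theorem aux_poly_cos (p : ℝ[X]) : ∃ (n : ℕ) (c : ℕ → ℝ), ∀ θ : ℝ,
    p.eval (Real.cos θ) = ∑ k ∈ Finset.range n, c k * Real.cos (k * θ) := by
  have main : (fun θ : ℝ => p.eval (Real.cos θ)) ∈
      Submodule.span ℝ (Set.range fun (k : ℕ) (θ : ℝ) => Real.cos (k * θ)) := by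
    induction p using Polynomial.induction_on' with
    | add p q hp hq => simpa [Pi.add_def] using Submodule.add_mem _ hp hq
    | monomial n a =>
      have e : (fun θ : ℝ => (monomial n a).eval (Real.cos θ))
        = a • (fun θ : ℝ => Real.cos θ ^ n) := by
        ext θ; simp
      rw [e]
      refine Submodule.smul_mem _ _ ?_
      clear e
      induction n with
      | zero => exact Submodule.subset_span ⟨0, by ext; simp⟩
      | succ n ih =>
        have : ∀ f ∈ Submodule.span ℝ (Set.range fun (k : ℕ) (θ : ℝ) => Real.cos (k * θ)),
            (fun θ => f θ * Real.cos θ) ∈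
            Submodule.span ℝ (Set.range fun (k : ℕ) (θ : ℝ) => Real.cos (k * θ)) := by
          intro f hf
          induction hf using Submodule.span_induction with
          | mem f hf =>
            obtain ⟨k, rfl⟩ := hf
            cases k with
            | zero => exact Submodule.subset_span ⟨1, by ext; simp⟩
            | succ k =>
              have e : (fun θ : ℝ => Real.cos ((k + 1 : ℕ) * θ) * Real.cos θ)
                = (1/2 : ℝ) • (fun θ : ℝ => Real.cos ((k + 2 : ℕ) * θ))
                  + (1/2 : ℝ) • (fun θ : ℝ => Real.cos (k * θ)) := by
                ext θ
                have e1 : ((k + 2 : ℕ) : ℝ) * θ = (k + 1 : ℕ) * θ + θ := by push_cast; ring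
                have e2 : (k : ℝ) * θ = (k + 1 : ℕ) * θ - θ := by push_cast; ring
                simp only [Pi.add_apply, Pi.smul_apply, smul_eq_mul]
                rw [e1, e2, Real.cos_add, Real.cos_sub]; ring
              simp only
              rw [e]
              exact Submodule.add_mem _ (Submodule.smul_mem _ _ (Submodule.subset_span ⟨k + 2, rfl⟩))
                (Submodule.smul_mem _ _ (Submodule.subset_span ⟨k, rfl⟩))
          | zero =>
            have e : (fun θ : ℝ => (0 : ℝ → ℝ) θ * Real.cos θ) = 0 := by ext; simp
            rw [e]
            exact Submodule.zero_mem _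
          | add f g _ _ hf hg => simpa [add_mul, Pi.add_def] using Submodule.add_mem _ hf hg
          | smul r f _ hf =>
            simpa [mul_assoc, Pi.smul_def] using Submodule.smul_mem _ r hf
        simpa [pow_succ] using this _ ih
  rw [Finsupp.mem_span_range_iff_exists_finsupp] at main
  obtain ⟨c, hc⟩ := main
  refine ⟨c.support.sup id + 1, c, fun θ => ?_⟩
  rw [← congrFun hc θ, Finsupp.sum_of_support_subset (s := Finset.range (c.support.sup id + 1))]
  · simp [Finset.sum_apply]
  · intro k hk
    have : id k ≤ c.support.sup id := Finset.le_sup hk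
    simp only [id] at this
    simp; omega
  · simp

theorem aux_toep_psd (f : ℝ → ℝ) (hf : Continuous f) (hf0 : ∀ θ ∈ Set.Icc 0 Real.pi, 0 ≤ f θ)
    (d : ℕ) : (toepN d (fun k => ∫ θ in (0:ℝ)..Real.pi, Real.cos (k * θ) * f θ)).PosSemidef := by
  refine Matrix.PosSemidef.of_dotProduct_mulVec_nonneg ?_ ?_
  · ext i j
    simp only [Matrix.conjTranspose_apply, toepN, star_trivial]
    rw [show ((j : ℤ) - (i : ℤ)).natAbs = ((i : ℤ) - (j : ℤ)).natAbs by omega]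
  · intro x
    have hcos : ∀ (i j : ℕ) (θ : ℝ), Real.cos ((((i : ℤ) - (j : ℤ)).natAbs : ℕ) * θ)
        = Real.cos (i * θ) * Real.cos (j * θ) + Real.sin (i * θ) * Real.sin (j * θ) := by
      intro i j θ
      rw [← Real.cos_sub, ← sub_mul, Nat.cast_natAbs]
      push_cast
      rcases abs_choice ((i : ℝ) - j) with h | h <;> rw [h]
      rw [neg_mul, Real.cos_neg]
    have e : star x ⬝ᵥ (toepN d (fun k => ∫ θ in (0:ℝ)..Real.pi, Real.cos (k * θ) * f θ)).mulVec x
      = ∫ θ in (0:ℝ)..Real.pi, ((∑ i, x i * Real.cos ((i : ℕ) * θ)) ^ 2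
          + (∑ i, x i * Real.sin ((i : ℕ) * θ)) ^ 2) * f θ := by
      have e1 : ∀ θ, ((∑ i, x i * Real.cos ((i : ℕ) * θ)) ^ 2
          + (∑ i, x i * Real.sin ((i : ℕ) * θ)) ^ 2) * f θ
          = ∑ i, ∑ j, x i * x j *
            (Real.cos ((((i : ℕ) : ℤ) - ((j : ℕ) : ℤ)).natAbs * θ) * f θ) := by
        intro θ
        rw [sq, sq, Finset.sum_mul_sum, Finset.sum_mul_sum]
        simp only [← Finset.sum_add_distrib, Finset.sum_mul, hcos]
        exact Finset.sum_congr rfl fun i _ => Finset.sum_congr rfl fun j _ => by ring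
      simp only [e1]
      rw [intervalIntegral.integral_finsetSum
        (fun i _ => Continuous.intervalIntegrable (by fun_prop) _ _)]
      simp only [dotProduct, Matrix.mulVec, toepN, Pi.star_apply, star_trivial, Finset.mul_sum]
      refine Finset.sum_congr rfl fun i _ => ?_
      rw [intervalIntegral.integral_finsetSum
        (fun i _ => Continuous.intervalIntegrable (by fun_prop) _ _)]
      refine Finset.sum_congr rfl fun j _ => ?_
      rw [intervalIntegral.integral_const_mul]
      ring
    rw [e]
    exact intervalIntegral.integral_nonneg Real.pi_pos.le
      fun θ hθ => mul_nonneg (by positivity) (hf0 θ hθ)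

theorem aux_lower (Q : ℝ[X]) (v : ℝ → ℝ) (hv : Continuous v) (hv0 : ∀ θ, 0 < v θ)
    (yp ym : ℕ → ℝ) (hp : ∀ d, (toepN d yp).PosSemidef) (hm : ∀ d, (toepN d ym).PosSemidef)
    (hy : ∀ k : ℕ, yp k - ym k
      = ∫ θ in (0:ℝ)..Real.pi, Real.cos (k * θ) * (Q.eval (Real.cos θ) * Real.sin θ / v θ)) :
    ∫ θ in (0:ℝ)..Real.pi, |Q.eval (Real.cos θ) * Real.sin θ / v θ| ≤ yp 0 + ym 0 := by
  have hvn : ∀ θ, v θ ≠ 0 := fun θ => (hv0 θ).ne'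
  have hQ : Continuous fun θ : ℝ => Q.eval (Real.cos θ) :=
    Q.continuous.comp Real.continuous_cos
  have hs : Continuous fun θ : ℝ => Real.sin θ / v θ := Real.continuous_sin.div hv hvn
  have hg : Continuous fun θ : ℝ => Q.eval (Real.cos θ) * Real.sin θ / v θ :=
    (hQ.mul Real.continuous_sin).div hv hvn
  set C := ∫ θ in (0:ℝ)..Real.pi, Real.sin θ / v θ with hC
  have hsn : ∀ θ ∈ Set.Icc 0 Real.pi, 0 ≤ Real.sin θ / v θ := fun θ hθ =>
    div_nonneg (Real.sin_nonneg_of_mem_Icc hθ) (hv0 θ).le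
  set X := ∫ θ in (0:ℝ)..Real.pi, |Q.eval (Real.cos θ) * Real.sin θ / v θ| with hX
  have key : ∀ ε > 0, X ≤ (1 + ε) * (yp 0 + ym 0) + ε * C + ε * X := by
    intro ε hε
    have hden : ∀ x, |Q.eval x| + ε ≠ 0 := fun x => by positivity
    have hfc : Continuous fun x : ℝ => Q.eval x / (|Q.eval x| + ε) :=
      Q.continuous.div (by fun_prop) hden
    obtain ⟨p, hpn⟩ := exists_polynomial_near_of_continuousOn (-1) 1 _ hfc.continuousOn ε hε
    have hpc : Continuous fun θ : ℝ => p.eval (Real.cos θ) :=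
      p.continuous.comp Real.continuous_cos
    have hnear : ∀ θ : ℝ, |p.eval (Real.cos θ)
        - Q.eval (Real.cos θ) / (|Q.eval (Real.cos θ)| + ε)| < ε := fun θ =>
      hpn _ ⟨Real.neg_one_le_cos θ, Real.cos_le_one θ⟩
    have hf1 : ∀ x, |Q.eval x / (|Q.eval x| + ε)| ≤ 1 := by
      intro x
      have h0 : 0 < |Q.eval x| + ε := by positivity
      rw [abs_div, abs_of_pos h0, div_le_one h0]; linarith
    obtain ⟨n, c, hnc⟩ := aux_poly_cos p
    have bound : ∀ (y : ℕ → ℝ) (s : ℝ), |s| = 1 → (∀ d, (toepN d y).PosSemidef) →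
        s * ∑ k ∈ Finset.range n, c k * y k ≤ (1 + ε) * y 0 := by
      intro y s hs1 hyp
      have h := aux_pos y hyp (n + 1)
        (fun k => (if k = 0 then (1 + ε) else 0) - s * (if k < n then c k else 0)) ?_
      · simp only [sub_mul, Finset.sum_sub_distrib] at h
        simp only [ite_mul, zero_mul, Finset.sum_ite_eq', Finset.mem_range] at h
        rw [if_pos (Nat.succ_pos n), Finset.sum_range_succ (n := n)] at h
        have e : ∀ k ∈ Finset.range n, (s * if k < n then c k else 0) * y k = s * (c k * y k) := by
          intro k hk; rw [if_pos (Finset.mem_range.1 hk)]; ring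
        rw [Finset.sum_congr rfl e, ← Finset.mul_sum] at h
        simp at h
        linarith
      · intro θ
        simp only [sub_mul, Finset.sum_sub_distrib]
        simp only [ite_mul, zero_mul, Finset.sum_ite_eq', Finset.mem_range]
        rw [if_pos (Nat.succ_pos n), Finset.sum_range_succ (n := n)]
        have e : ∀ k ∈ Finset.range n, (s * if k < n then c k else 0) * Real.cos (k * θ)
            = s * (c k * Real.cos (k * θ)) := by
          intro k hk; rw [if_pos (Finset.mem_range.1 hk)]; ring
        rw [Finset.sum_congr rfl e, ← Finset.mul_sum, ← hnc]
        simp only [lt_irrefl, if_false, mul_zero, zero_mul, add_zero, Nat.cast_zero, Real.cos_zero,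
          mul_one]
        have h1 : |s * p.eval (Real.cos θ)| ≤ 1 + ε := by
          rw [abs_mul, hs1, one_mul]
          have h2 := abs_le.1 (hf1 (Real.cos θ))
          have h3 := abs_lt.1 (hnear θ)
          rw [abs_le]; constructor <;> linarith
        linarith [le_abs_self (s * p.eval (Real.cos θ))]
    have b1 := bound yp 1 (by simp) hp
    have b2 := bound ym (-1) (by simp) hm
    have hI : ∫ θ in (0:ℝ)..Real.pi,
        p.eval (Real.cos θ) * (Q.eval (Real.cos θ) * Real.sin θ / v θ)
        = ∑ k ∈ Finset.range n, c k * (yp k - ym k) := by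
      simp only [hnc, Finset.sum_mul, mul_assoc (c _)]
      rw [intervalIntegral.integral_finsetSum
        (fun i _ => Continuous.intervalIntegrable (by fun_prop) _ _)]
      refine Finset.sum_congr rfl fun k _ => ?_
      rw [intervalIntegral.integral_const_mul, hy]
    have hmono : X ≤ ∫ θ in (0:ℝ)..Real.pi,
        (p.eval (Real.cos θ) * (Q.eval (Real.cos θ) * Real.sin θ / v θ)
          + ε * (Real.sin θ / v θ) + ε * |Q.eval (Real.cos θ) * Real.sin θ / v θ|) := by
      refine intervalIntegral.integral_mono_on Real.pi_pos.le
        (hg.abs.intervalIntegrable _ _) (Continuous.intervalIntegrable (by fun_prop) _ _) ?_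
      intro θ hθ
      have hS := hsn θ hθ
      rw [mul_div_assoc, abs_mul, abs_of_nonneg hS, ← mul_assoc, ← mul_assoc, ← add_mul, ← add_mul]
      refine mul_le_mul_of_nonneg_right ?_ hS
      have h3 := hnear θ
      generalize Q.eval (Real.cos θ) = q at *
      generalize p.eval (Real.cos θ) = r at *
      have h0 : 0 < |q| + ε := by positivity
      have h4 : |q| - ε ≤ q / (|q| + ε) * q := by
        rw [div_mul_eq_mul_div, le_div_iff₀ h0]
        nlinarith [abs_mul_abs_self q]
      have h5 : |(r - q / (|q| + ε)) * q| ≤ ε * |q| := by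
        rw [abs_mul]
        exact mul_le_mul_of_nonneg_right h3.le (abs_nonneg q)
      have h6 := (abs_le.1 h5).1
      rw [sub_mul] at h6
      linarith
    rw [intervalIntegral.integral_add (Continuous.intervalIntegrable (by fun_prop) _ _)
      (Continuous.intervalIntegrable (by fun_prop) _ _),
      intervalIntegral.integral_add (Continuous.intervalIntegrable (by fun_prop) _ _)
      (Continuous.intervalIntegrable (by fun_prop) _ _), hI, intervalIntegral.integral_const_mul,
      intervalIntegral.integral_const_mul] at hmono
    simp only [mul_sub, Finset.sum_sub_distrib] at hmono
    linarith
  by_contra hlt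
  push Not at hlt
  set Y := yp 0 + ym 0 with hY
  have hpos : 0 < |Y + C + X| + 1 := by positivity
  have h1 := key ((X - Y) / (2 * (|Y + C + X| + 1))) (div_pos (by linarith) (by positivity))
  set ε := (X - Y) / (2 * (|Y + C + X| + 1)) with hε
  have h2 : ε * (|Y + C + X| + 1) = (X - Y) / 2 := by rw [hε]; field_simp
  have h3 : 0 < ε := div_pos (by linarith) (by positivity)
  nlinarith [mul_le_mul_of_nonneg_left (le_abs_self (Y + C + X)) h3.le]

theorem aux_subst (a b : ℝ) (hab : a < b) (w : ℝ → ℝ) (hw : ContinuousOn w (Set.Icc a b))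
    (hw0 : ∀ x ∈ Set.Icc a b, 0 < w x) (P : ℝ[X]) :
    ∫ t in a..b, |P.eval t| / w t = (b - a) / 2 * ∫ θ in (0:ℝ)..Real.pi,
      |(transplant a b P).eval (Real.cos θ) * Real.sin θ
        / w (((b - a) * Real.cos θ + a + b) / 2)| := by
  have hmem : ∀ θ : ℝ, ((b - a) * Real.cos θ + a + b) / 2 ∈ Set.Icc a b := by
    intro θ
    have h1 := Real.neg_one_le_cos θ
    have h2 := Real.cos_le_one θ
    constructor <;> nlinarith
  have h := intervalIntegral.integral_comp_mul_deriv' (a := 0) (b := Real.pi)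
    (f := fun θ => ((b - a) * Real.cos θ + a + b) / 2)
    (f' := fun θ => ((b - a) * (-Real.sin θ)) / 2) (g := fun t => |P.eval t| / w t)
    (fun θ _ => ((((Real.hasDerivAt_cos θ).const_mul (b - a)).add_const a).add_const b).div_const 2)
    (by fun_prop) ?_
  · simp only [Real.cos_zero, Real.cos_pi] at h
    rw [show ((b - a) * 1 + a + b) / 2 = b by ring, show ((b - a) * -1 + a + b) / 2 = a by ring,
      intervalIntegral.integral_symm a b] at h
    rw [← neg_eq_iff_eq_neg] at h
    rw [← h, ← intervalIntegral.integral_neg, ← intervalIntegral.integral_const_mul]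
    refine intervalIntegral.integral_congr fun θ hθ => ?_
    rw [Set.uIcc_of_le Real.pi_pos.le] at hθ
    have hs := Real.sin_nonneg_of_mem_Icc hθ
    have hv := hw0 _ (hmem θ)
    have e : (transplant a b P).eval (Real.cos θ)
        = P.eval (((b - a) * Real.cos θ + a + b) / 2) := by
      simp only [transplant, eval_comp, eval_add, eval_mul, eval_C, eval_X]
      congr 1; ring
    simp only [Function.comp]
    rw [e, abs_div, abs_mul, abs_of_nonneg hs, abs_of_pos hv]
    ring
  · have hsub : (fun θ => ((b - a) * Real.cos θ + a + b) / 2) '' Set.uIcc 0 Real.pi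
        ⊆ Set.Icc a b := by
      rintro _ ⟨θ, _, rfl⟩
      exact hmem θ
    refine ContinuousOn.mono ?_ hsub
    exact P.continuous.abs.continuousOn.div hw fun x hx => (hw0 x hx).ne'

theorem aux_moment (a b : ℝ) (w : ℝ → ℝ)
    (hv : Continuous fun θ => w (((b - a) * Real.cos θ + a + b) / 2))
    (hv0 : ∀ θ, 0 < w (((b - a) * Real.cos θ + a + b) / 2)) (N : ℕ) (Q : ℝ[X])
    (q : Fin (N + 1) → ℝ) (hq : Q = ∑ n : Fin (N + 1),
      Polynomial.C (q n) * Polynomial.Chebyshev.U ℝ ((n : ℕ) : ℤ)) (k : ℕ) :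
    ∑ n : Fin (N + 1), Jent a b w k (n : ℕ) * q n
      = ∫ θ in (0:ℝ)..Real.pi, Real.cos (k * θ) * (Q.eval (Real.cos θ) * Real.sin θ
        / w (((b - a) * Real.cos θ + a + b) / 2)) := by
  have e : ∀ θ, Real.cos (k * θ) * (Q.eval (Real.cos θ) * Real.sin θ
        / w (((b - a) * Real.cos θ + a + b) / 2))
      = ∑ n : Fin (N + 1), Real.cos (k * θ) * Real.sin (((n : ℕ) + 1) * θ)
        / w (((b - a) * Real.cos θ + a + b) / 2) * q n := by
    intro θ
    rw [hq, eval_finsetSum, Finset.sum_mul, Finset.sum_div, Finset.mul_sum]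
    refine Finset.sum_congr rfl fun n _ => ?_
    have h := Polynomial.Chebyshev.U_real_cos θ ((n : ℕ) : ℤ)
    rw [Int.cast_natCast] at h
    rw [← h, eval_mul, eval_C]
    ring
  simp only [e]
  rw [intervalIntegral.integral_finsetSum]
  · refine Finset.sum_congr rfl fun n _ => ?_
    rw [intervalIntegral.integral_mul_const, Jent]
  · intro n _
    refine Continuous.intervalIntegrable ?_ _ _
    exact (Continuous.div (by fun_prop) hv fun θ => (hv0 θ).ne').mul continuous_const

/-- The weighted `L1` norm of a polynomial `P` of degree at most `N` on `K` equals the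
infimum, over all sequences `y^{ℓ,±} ∈ ℝ^ℕ` with `y^{ℓ,+} − y^{ℓ,−} = J^ℓ W^ℓ p` and all
Toeplitz sections `Toep_d(y^{ℓ,±})` positive semidefinite, of
`∑_ℓ ((b_ℓ−a_ℓ)/2)(y^{ℓ,+}_0 + y^{ℓ,−}_0)`; moreover the infimum is attained. -/
theorem L1_norm_moment_reformulation
    (L : ℕ) (hL : 0 < L) (a b : ℕ → ℝ)
    (ha0 : a 0 = -1) (hbL : b (L - 1) = 1)
    (hab : ∀ ℓ < L, a ℓ < b ℓ)
    (hgap : ∀ ℓ, ℓ + 1 < L → b ℓ < a (ℓ + 1))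
    (w : ℝ → ℝ)
    (hw : ContinuousOn w (⋃ ℓ ∈ Finset.range L, Set.Icc (a ℓ) (b ℓ)))
    (hwpos : ∀ x ∈ ⋃ ℓ ∈ Finset.range L, Set.Icc (a ℓ) (b ℓ), 0 < w x)
    (N : ℕ) (P : Polynomial ℝ) (hP : P.natDegree ≤ N)
    (q : ℕ → Fin (N + 1) → ℝ)
    (hq : ∀ ℓ < L, transplant (a ℓ) (b ℓ) P
        = ∑ n : Fin (N + 1), Polynomial.C (q ℓ n) * Polynomial.Chebyshev.U ℝ ((n : ℕ) : ℤ)) :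
    IsLeast { s : ℝ |
      ∃ yp ym : ℕ → ℕ → ℝ,
        (∀ ℓ < L, ∀ k : ℕ,
            yp ℓ k - ym ℓ k = ∑ n : Fin (N + 1), Jent (a ℓ) (b ℓ) w k (n : ℕ) * q ℓ n) ∧
        (∀ ℓ < L, ∀ d : ℕ, (toepN d (yp ℓ)).PosSemidef ∧ (toepN d (ym ℓ)).PosSemidef) ∧
        s = ∑ ℓ ∈ Finset.range L, ((b ℓ - a ℓ) / 2) * (yp ℓ 0 + ym ℓ 0) }
      (L1K L a b w P) := by
  have hsubK : ∀ ℓ < L, Set.Icc (a ℓ) (b ℓ) ⊆ ⋃ ℓ ∈ Finset.range L, Set.Icc (a ℓ) (b ℓ) := by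
    intro ℓ hℓ x hx
    simp only [Set.mem_iUnion, Finset.mem_range]
    exact ⟨ℓ, hℓ, hx⟩
  have hmem : ∀ ℓ < L, ∀ θ : ℝ,
      ((b ℓ - a ℓ) * Real.cos θ + a ℓ + b ℓ) / 2 ∈ Set.Icc (a ℓ) (b ℓ) := by
    intro ℓ hℓ θ
    have h0 := hab ℓ hℓ
    have h1 := Real.neg_one_le_cos θ
    have h2 := Real.cos_le_one θ
    constructor <;> nlinarith
  have hv0 : ∀ ℓ < L, ∀ θ : ℝ, 0 < w (((b ℓ - a ℓ) * Real.cos θ + a ℓ + b ℓ) / 2) :=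
    fun ℓ hℓ θ => hwpos _ (hsubK ℓ hℓ (hmem ℓ hℓ θ))
  have hv : ∀ ℓ < L, Continuous fun θ : ℝ => w (((b ℓ - a ℓ) * Real.cos θ + a ℓ + b ℓ) / 2) :=
    fun ℓ hℓ => (hw.mono (hsubK ℓ hℓ)).comp_continuous (by fun_prop) (hmem ℓ hℓ)
  have hsub : ∀ ℓ < L, ∫ t in (a ℓ)..(b ℓ), |P.eval t| / w t
      = (b ℓ - a ℓ) / 2 * ∫ θ in (0:ℝ)..Real.pi,
        |(transplant (a ℓ) (b ℓ) P).eval (Real.cos θ) * Real.sin θ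
          / w (((b ℓ - a ℓ) * Real.cos θ + a ℓ + b ℓ) / 2)| :=
    fun ℓ hℓ => aux_subst _ _ (hab ℓ hℓ) w (hw.mono (hsubK ℓ hℓ))
      (fun x hx => hwpos x (hsubK ℓ hℓ hx)) P
  have hmom : ∀ ℓ < L, ∀ k : ℕ, ∑ n : Fin (N + 1), Jent (a ℓ) (b ℓ) w k (n : ℕ) * q ℓ n
      = ∫ θ in (0:ℝ)..Real.pi, Real.cos (k * θ) *
        ((transplant (a ℓ) (b ℓ) P).eval (Real.cos θ) * Real.sin θ
          / w (((b ℓ - a ℓ) * Real.cos θ + a ℓ + b ℓ) / 2)) :=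
    fun ℓ hℓ k => aux_moment _ _ w (hv ℓ hℓ) (hv0 ℓ hℓ) N _ _ (hq ℓ hℓ) k
  constructor
  · let g : ℕ → ℝ → ℝ := fun ℓ θ => (transplant (a ℓ) (b ℓ) P).eval (Real.cos θ) * Real.sin θ
          / w (((b ℓ - a ℓ) * Real.cos θ + a ℓ + b ℓ) / 2)
    have hg : ∀ ℓ < L, Continuous (g ℓ) := fun ℓ hℓ =>
      (((transplant (a ℓ) (b ℓ) P).continuous.comp Real.continuous_cos).mul
        Real.continuous_sin).div (hv ℓ hℓ) fun θ => (hv0 ℓ hℓ θ).ne'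
    refine ⟨fun ℓ k => ∫ θ in (0:ℝ)..Real.pi, Real.cos (k * θ) * max (g ℓ θ) 0,
      fun ℓ k => ∫ θ in (0:ℝ)..Real.pi, Real.cos (k * θ) * max (-g ℓ θ) 0, ?_, ?_, ?_⟩
    · intro ℓ hℓ k
      have hgl := hg ℓ hℓ
      rw [hmom ℓ hℓ k, ← intervalIntegral.integral_sub
        (Continuous.intervalIntegrable (by fun_prop) _ _)
        (Continuous.intervalIntegrable (by fun_prop) _ _)]
      refine intervalIntegral.integral_congr fun θ _ => ?_
      change _ = Real.cos (k * θ) * g ℓ θ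
      rw [← mul_sub, max_zero_sub_max_neg_zero_eq_self]
    · intro ℓ hℓ d
      have hgl := hg ℓ hℓ
      exact ⟨aux_toep_psd _ (by fun_prop) (fun θ _ => le_max_right _ _) d,
        aux_toep_psd _ (by fun_prop) (fun θ _ => le_max_right _ _) d⟩
    · refine Finset.sum_congr rfl fun ℓ hℓ' => ?_
      have hℓ := Finset.mem_range.1 hℓ'
      have hgl := hg ℓ hℓ
      rw [hsub ℓ hℓ, ← intervalIntegral.integral_add
        (Continuous.intervalIntegrable (by fun_prop) _ _)
        (Continuous.intervalIntegrable (by fun_prop) _ _)]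
      congr 1
      refine intervalIntegral.integral_congr fun θ _ => ?_
      change |g ℓ θ| = _
      simp only [Nat.cast_zero, zero_mul, Real.cos_zero, one_mul]
      rcases le_total 0 (g ℓ θ) with h | h
      · rw [abs_of_nonneg h, max_eq_left h, max_eq_right (by linarith)]; ring
      · rw [abs_of_nonpos h, max_eq_right h, max_eq_left (by linarith)]; ring
  · rintro s ⟨yp, ym, hy, hpsd, rfl⟩
    refine Finset.sum_le_sum fun ℓ hℓ' => ?_
    have hℓ := Finset.mem_range.1 hℓ'
    rw [hsub ℓ hℓ]
    refine mul_le_mul_of_nonneg_left ?_ (by linarith [hab ℓ hℓ])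
    exact aux_lower _ _ (hv ℓ hℓ) (hv0 ℓ hℓ) _ _ (fun d => (hpsd ℓ hℓ d).1)
      (fun d => (hpsd ℓ hℓ d).2) fun k => by rw [hy ℓ hℓ k, hmom ℓ hℓ k]
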